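/- arXiv:2502.10348 — 3 statements merged into one kernel-verified Lean document; each statement's English description precedes it below -/
import Mathlib

section
/- Let G = (V, E) be a weighted digraph, let s ∈ V, let ξ ≥ 0 be a real number, let r be a natural number, and let d : V → ℝ satisfy d(s) = 0. Assume: (i) for every edge e = su ∈ E whose tail is s, d(u) ≤ (1+ξ)·(d(s) + w(e)); and (ii) every vertex of V is r-certified with respect to d. Then for every t ∈ V and every path P = s → t in G on which s occurs only as the first vertex, d(t) ≤ (1+ξ)^{r+1} · w(P). -/
/-!
Split the path `s → t` after its first edge `(s, u)`. Hypothesis `hsrc` gives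
`d u ≤ (1 + ξ) * w (s, u)`, and the remaining path `Q = u → t` avoids `s`, so `r`-certification of
`u` gives `d t ≤ (1 + ξ) ^ r * (d u + w(Q))`. As `w(Q) ≥ 0`, also `w(Q) ≤ (1 + ξ) * w(Q)`, and
combining the three bounds gives the claim. For the empty path both sides are `0`.
-/

/-- `IsWalk E u l v` : the list of vertices `l` is a path (walk) from `u` to `v`
in the digraph with edge set `E`; consecutive vertices must form edges.
A single-vertex list `[u]` is the empty path from `u` to `u`. -/
def IsWalk {V : Type*} (E : Set (V × V)) (u : V) (l : List V) (v : V) : Prop :=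
  l ≠ [] ∧ l.head? = some u ∧ l.getLast? = some v ∧
    l.Chain' (fun a b => (a, b) ∈ E)

/-- The weight of a walk given by its vertex list: the sum of the weights of the
consecutive pairs. -/
def walkWeight {V : Type*} (w : V × V → ℝ) (l : List V) : ℝ :=
  ((l.zip l.tail).map w).sum

/-- `u` is `k`-certified with respect to the estimates `d`: for every path
`P = u → v` avoiding the source `s`, `d v ≤ (1+ξ)^k * (d u + w(P))`. -/
def Certified {V : Type*} (E : Set (V × V)) (w : V × V → ℝ) (s : V)
    (d : V → ℝ) (ξ : ℝ) (k : ℕ) (u : V) : Prop :=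
  ∀ (v : V) (l : List V), IsWalk E u l v → (∀ x ∈ l, x ≠ s) →
    d v ≤ (1 + ξ) ^ k * (d u + walkWeight w l)

theorem walkWeight_cons_cons {V : Type*} (w : V × V → ℝ) (a b : V) (l : List V) :
    walkWeight w (a :: b :: l) = w (a, b) + walkWeight w (b :: l) := by
  simp [walkWeight]

theorem walkWeight_nonneg {V : Type*} (E : Set (V × V)) (w : V × V → ℝ)
    (hw : ∀ e ∈ E, 0 ≤ w e) :
    ∀ l : List V, l.IsChain (fun a b => (a, b) ∈ E) → 0 ≤ walkWeight w l
  | [], _ => by simp [walkWeight]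
  | [_], _ => by simp [walkWeight]
  | a :: b :: l, h => by
    rw [List.isChain_cons_cons] at h
    rw [walkWeight_cons_cons]
    exact add_nonneg (hw _ h.1) (walkWeight_nonneg E w hw (b :: l) h.2)

theorem estimate_accuracy_from_ranks {V : Type*} [Fintype V]
    (E : Set (V × V)) (w : V × V → ℝ) (hw : ∀ e ∈ E, 0 ≤ w e)
    (s : V) (ξ : ℝ) (hξ : 0 ≤ ξ) (r : ℕ) (d : V → ℝ) (hds : d s = 0)
    (hsrc : ∀ e ∈ E, e.1 = s → d e.2 ≤ (1 + ξ) * (d s + w e))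
    (hcert : ∀ v : V, Certified E w s d ξ r v) :
    ∀ (t : V) (l : List V), IsWalk E s l t → (∀ x ∈ l.tail, x ≠ s) →
      d t ≤ (1 + ξ) ^ (r + 1) * walkWeight w l := by
  rintro t l ⟨hne, hhead, hlast, hchain⟩ hs
  match l, hne, hhead, hlast, hchain, hs with
  | [a], _, hhead, hlast, _, _ =>
    obtain rfl : a = s := by simpa using hhead
    obtain rfl : a = t := by simpa using hlast
    simp [walkWeight, hds]
  | a :: u :: q, _, hhead, hlast, hchain, hs =>
    obtain rfl : a = s := by simpa using hhead
    obtain ⟨hedge, hq⟩ := List.isChain_cons_cons.mp hchain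
    have hu : d u ≤ (1 + ξ) * w (a, u) := by
      simpa [hds] using hsrc (a, u) hedge rfl
    have ht : d t ≤ (1 + ξ) ^ r * (d u + walkWeight w (u :: q)) :=
      hcert u t (u :: q) ⟨by simp, by simp, by simpa using hlast, hq⟩ hs
    have hQ : 0 ≤ walkWeight w (u :: q) := walkWeight_nonneg E w hw _ hq
    rw [walkWeight_cons_cons]
    calc d t ≤ (1 + ξ) ^ r * (d u + walkWeight w (u :: q)) := ht
      _ ≤ (1 + ξ) ^ r * ((1 + ξ) * (w (a, u) + walkWeight w (u :: q))) := by
        refine mul_le_mul_of_nonneg_left ?_ (by positivity)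
        linarith [mul_nonneg hξ hQ]
      _ = (1 + ξ) ^ (r + 1) * (w (a, u) + walkWeight w (u :: q)) := by ring
end

section
/- Let G = (V, E) be a weighted digraph, let s ∈ V, let X ⊆ V with s ∉ X, let c ≥ 1 be a real number, and let d : V → [0, ∞] satisfy dist_G(s, u) ≤ d(u) ≤ c · dist_G(s, u) for every u ∈ V ∖ X. For t ∈ X define D(t) ∈ [0, ∞] as the infimum, over all edges e = uv ∈ E with u ∉ X and v ∈ X and all paths P = v → t in G all of whose vertices lie in X, of the quantity d(u) + w(e) + w(P). Then for every t ∈ X: (a) dist_G(s, t) ≤ D(t); and (b) for every path Q = s → t in G, D(t) ≤ c · w(Q); consequently D(t) ≤ c · dist_G(s, t). -/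
/-!
For (a), a candidate for `D t` consists of an edge `u → v` entering `X` and a walk from `v` to `t`;
since `dist(s, u) ≤ d u`, appending that edge and that walk to walks `s → u` shows that
the candidate is at least `dist(s, t)` (`eDist_le_add`).

For (b), a walk `Q` from `s ∉ X` to `t ∈ X` has a last vertex `a` outside `X`. Cutting there
(`IsWalk.exists_last_exit`) writes `Q` as a walk `s → a`, an edge `a → b` entering `X`, and a
walk `b → t` inside `X`. The last two pieces form a candidate for `D t`, and its value is at most
`c * w(Q)` because `d a ≤ c * dist(s, a)` and `1 ≤ c`. The bound by `c * dist(s, t)` follows by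
taking the infimum over `Q`, as `c` is neither `0` nor `∞`.
-/

open scoped ENNReal NNReal

/-- The weight (in `[0,∞]`) of a walk given by its vertex list: the sum of the
(nonnegative) weights of the consecutive pairs. -/
noncomputable def walkWeightE {V : Type*} (w : V × V → ℝ≥0) (l : List V) : ℝ≥0∞ :=
  ((l.zip l.tail).map (fun e => (w e : ℝ≥0∞))).sum

/-- The distance from `u` to `v`: the infimum of the weights of all paths
`u → v`; equals `∞` if there is no such path. -/
noncomputable def eDist {V : Type*} (E : Set (V × V)) (w : V × V → ℝ≥0)
    (u v : V) : ℝ≥0∞ :=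
  ⨅ (l : List V) (_ : IsWalk E u l v), walkWeightE w l

theorem walkWeightE_cons_cons {V : Type*} (w : V × V → ℝ≥0) (a b : V) (l : List V) :
    walkWeightE w (a :: b :: l) = (w (a, b) : ℝ≥0∞) + walkWeightE w (b :: l) := by
  simp [walkWeightE]

theorem isWalk_cons_cons {V : Type*} {E : Set (V × V)} {u a b v : V} {l : List V} :
    IsWalk E u (a :: b :: l) v ↔ a = u ∧ (a, b) ∈ E ∧ IsWalk E b (b :: l) v := by
  simp only [IsWalk, List.Chain', List.isChain_cons_cons, List.getLast?_cons_cons]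
  simp
  tauto

theorem isWalk_singleton {V : Type*} {E : Set (V × V)} {u a v : V} :
    IsWalk E u [a] v ↔ a = u ∧ a = v := by
  simp [IsWalk, List.Chain']

/-- Two walks joined by an edge `(a, b)` concatenate to a walk, and weights add up. -/
theorem IsWalk.append {V : Type*} {E : Set (V × V)} (w : V × V → ℝ≥0) {a b t : V}
    {l₂ : List V} (hab : (a, b) ∈ E) (h₂ : IsWalk E b l₂ t) :
    ∀ (l₁ : List V) (u : V), IsWalk E u l₁ a → IsWalk E u (l₁ ++ l₂) t ∧
      walkWeightE w (l₁ ++ l₂) = walkWeightE w l₁ + (w (a, b) : ℝ≥0∞) + walkWeightE w l₂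
  | [], _, h => absurd rfl h.1
  | [x], u, h => by
    obtain ⟨rfl, rfl⟩ := isWalk_singleton.1 h
    obtain _ | ⟨y, m⟩ := l₂
    · exact absurd rfl h₂.1
    · obtain rfl : y = b := by simpa using h₂.2.1
      refine ⟨isWalk_cons_cons.2 ⟨rfl, hab, h₂⟩, ?_⟩
      rw [List.singleton_append, walkWeightE_cons_cons]
      simp [walkWeightE]
  | x :: y :: m, u, h => by
    obtain ⟨rfl, hxy, h'⟩ := isWalk_cons_cons.1 h
    obtain ⟨hw, he⟩ := IsWalk.append w hab h₂ (y :: m) y h'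
    refine ⟨isWalk_cons_cons.2 ⟨rfl, hxy, hw⟩, ?_⟩
    rw [List.cons_append, List.cons_append, walkWeightE_cons_cons, ← List.cons_append, he,
      walkWeightE_cons_cons]
    ring

/-- A walk ending in `X` either stays in `X` or splits at its last vertex `a` outside `X`. -/
theorem IsWalk.exists_last_exit {V : Type*} {E : Set (V × V)} {X : Set V} {t : V} (ht : t ∈ X) :
    ∀ (l : List V) (u : V), IsWalk E u l t → (∀ x ∈ l, x ∈ X) ∨
      ∃ (l₁ l₂ : List V) (a b : V), l = l₁ ++ l₂ ∧ IsWalk E u l₁ a ∧ (a, b) ∈ E ∧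
        IsWalk E b l₂ t ∧ a ∉ X ∧ b ∈ X ∧ ∀ x ∈ l₂, x ∈ X
  | [], _, h => absurd rfl h.1
  | [x], u, h => by
    obtain ⟨rfl, rfl⟩ := isWalk_singleton.1 h
    exact Or.inl (by simpa using ht)
  | x :: y :: m, u, h => by
    obtain ⟨rfl, hxy, h'⟩ := isWalk_cons_cons.1 h
    obtain hX | ⟨l₁, l₂, a, b, hl, h₁, hab, h₂, ha, hb, hX⟩ :=
      IsWalk.exists_last_exit ht (y :: m) y h'
    · by_cases hx : x ∈ X
      · exact Or.inl (List.forall_mem_cons.2 ⟨hx, hX⟩)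
      · exact Or.inr ⟨[x], y :: m, x, y, rfl, isWalk_singleton.2 ⟨rfl, rfl⟩, hxy, h', hx,
          hX y List.mem_cons_self, hX⟩
    · refine Or.inr ⟨x :: l₁, l₂, a, b, by rw [hl, List.cons_append], ?_, hab, h₂, ha, hb, hX⟩
      obtain _ | ⟨z, k⟩ := l₁
      · exact absurd rfl h₁.1
      · obtain rfl : z = y := by simpa using h₁.2.1
        exact isWalk_cons_cons.2 ⟨rfl, hxy, h₁⟩

theorem eDist_le_walkWeightE {V : Type*} {E : Set (V × V)} (w : V × V → ℝ≥0) {u v : V}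
    {l : List V} (h : IsWalk E u l v) : eDist E w u v ≤ walkWeightE w l :=
  iInf₂_le l h

/-- Triangle inequality for continuing along an edge `(a, b)` and then a given walk. -/
theorem eDist_le_add {V : Type*} {E : Set (V × V)} (w : V × V → ℝ≥0) {s a b t : V}
    {l : List V} (hab : (a, b) ∈ E) (h : IsWalk E b l t) :
    eDist E w s t ≤ eDist E w s a + (w (a, b) : ℝ≥0∞) + walkWeightE w l := by
  conv_rhs => rw [eDist, add_assoc]
  simp only [ENNReal.iInf_add]
  refine le_iInf₂ fun l₁ h₁ => ?_
  obtain ⟨hw, he⟩ := IsWalk.append w hab h l₁ s h₁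
  rw [← add_assoc, ← he]
  exact eDist_le_walkWeightE w hw

theorem search_correctness {V : Type*} [Fintype V]
    (E : Set (V × V)) (w : V × V → ℝ≥0) (s : V) (X : Set V) (hs : s ∉ X)
    (c : ℝ) (hc : 1 ≤ c) (d : V → ℝ≥0∞)
    (hd : ∀ u : V, u ∉ X →
      eDist E w s u ≤ d u ∧ d u ≤ ENNReal.ofReal c * eDist E w s u)
    (D : V → ℝ≥0∞)
    (hD : ∀ t : V, D t =
      ⨅ (e : V × V) (_ : e ∈ E) (_ : e.1 ∉ X) (_ : e.2 ∈ X)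
        (l : List V) (_ : IsWalk E e.2 l t) (_ : ∀ x ∈ l, x ∈ X),
          d e.1 + (w e : ℝ≥0∞) + walkWeightE w l) :
    ∀ t ∈ X,
      eDist E w s t ≤ D t ∧
      (∀ l : List V, IsWalk E s l t → D t ≤ ENNReal.ofReal c * walkWeightE w l) ∧
      D t ≤ ENNReal.ofReal c * eDist E w s t := by
  intro t ht
  have hc1 : 1 ≤ ENNReal.ofReal c := ENNReal.one_le_ofReal.2 hc
  have hQ : ∀ l : List V, IsWalk E s l t → D t ≤ ENNReal.ofReal c * walkWeightE w l := by
    intro l hl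
    obtain hX | ⟨l₁, l₂, a, b, rfl, h₁, hab, h₂, ha, hb, hX⟩ :=
      IsWalk.exists_last_exit ht l s hl
    · exact absurd (hX s (List.mem_of_mem_head? hl.2.1)) hs
    · have hDt : D t ≤ d a + (w (a, b) : ℝ≥0∞) + walkWeightE w l₂ := by
        rw [hD t]
        exact iInf_le_of_le (a, b) <| iInf_le_of_le hab <| iInf_le_of_le ha <|
          iInf_le_of_le hb <| iInf_le_of_le l₂ <| iInf_le_of_le h₂ <| iInf_le_of_le hX le_rfl
      rw [(IsWalk.append w hab h₂ l₁ s h₁).2, mul_add, mul_add]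
      refine hDt.trans (add_le_add (add_le_add ?_ ?_) ?_)
      · exact (hd a ha).2.trans (mul_le_mul_right (eDist_le_walkWeightE w h₁) _)
      · exact le_mul_of_one_le_left zero_le hc1
      · exact le_mul_of_one_le_left zero_le hc1
  refine ⟨?_, hQ, ?_⟩
  · rw [hD t]
    refine le_iInf fun e => le_iInf fun he => le_iInf fun hu => le_iInf fun _ =>
      le_iInf fun l => le_iInf fun hl => le_iInf fun _ => ?_
    refine (eDist_le_add w (a := e.1) he hl).trans ?_
    gcongr
    exact (hd e.1 hu).1
  · have h0 : ENNReal.ofReal c ≠ 0 := (zero_lt_one.trans_le hc1).ne'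
    simp only [eDist, ENNReal.mul_iInf_of_ne h0 ENNReal.ofReal_ne_top]
    exact le_iInf₂ hQ
end

section
/- Let ξ > 0, a > 0, and c ≥ 0 be real numbers, let k be a natural number, and let x_0, x_1, …, x_k be real numbers satisfying a ≤ x_i ≤ (1+ξ)^{2c} · a for all 0 ≤ i ≤ k, and x_{i+1} > (1+ξ) · x_{i−1} for all 1 ≤ i ≤ k−1. Then k < 4c + 2. -/
/-! Along even indices the sequence grows by a factor `1 + ξ` per step, so with `m = ⌊k/2⌋`
we get `(1 + ξ) ^ m * a ≤ x (2 * m) ≤ (1 + ξ) ^ (2 * c) * a`. Hence `m ≤ 2 * c`, and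
`k ≤ 2 * m + 1 ≤ 4 * c + 1`. -/

theorem interval_crossing_bound (ξ a c : ℝ) (hξ : 0 < ξ) (ha : 0 < a)
    (hc : 0 ≤ c) (k : ℕ) (x : ℕ → ℝ)
    (hbound : ∀ i ≤ k, a ≤ x i ∧ x i ≤ (1 + ξ) ^ (2 * c) * a)
    (hgrow : ∀ i, 1 ≤ i → i ≤ k - 1 → (1 + ξ) * x (i - 1) < x (i + 1)) :
    (k : ℝ) < 4 * c + 2 := by
  have key : ∀ m : ℕ, 2 * m ≤ k → (1 + ξ) ^ m * a ≤ x (2 * m) := by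
    intro m
    induction m with
    | zero => intro h; simpa using (hbound 0 h).1
    | succ m ih =>
      intro h
      have h1 := ih (by omega)
      have h2 : (1 + ξ) * x (2 * m) < x (2 * (m + 1)) :=
        hgrow (2 * m + 1) (by omega) (by omega)
      calc (1 + ξ) ^ (m + 1) * a = (1 + ξ) * ((1 + ξ) ^ m * a) := by ring
        _ ≤ (1 + ξ) * x (2 * m) := by gcongr
        _ ≤ x (2 * (m + 1)) := h2.le
  have hm : 2 * (k / 2) ≤ k := by omega
  have h3 := le_of_mul_le_mul_right ((key _ hm).trans (hbound _ hm).2) ha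
  rw [← Real.rpow_natCast, Real.rpow_le_rpow_left_iff (by linarith)] at h3
  have h4 : (k : ℝ) ≤ 2 * ((k / 2 : ℕ) : ℝ) + 1 := by
    exact_mod_cast (by omega : k ≤ 2 * (k / 2) + 1)
  linarith
end
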